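/- Let χ₁, χ₂ : ℝ^{1+d} → ℂ be smooth bounded functions (with all derivatives bounded) such that the distance between the supports of χ₁ and χ₂, measured in the t-variable, is at least d > 0. Then there exist C, c > 0 such that for all Schwartz functions u and all λ > 0, ‖χ₁ e^{-|D_t|²/λ}(χ₂ u)‖_{L²} ≤ C e^{-cλ} ‖u‖_{L²}, where e^{-|D_t|²/λ} is the Fourier multiplier in t with symbol e^{-|ξ_t|²/λ}. -/

import Mathlib

open MeasureTheory

/-- Cauchy–Schwarz for a nonnegative weight. -/
theorem sq_lintegral_mul_le {α : Type*} [MeasurableSpace α] (μ : Measure α) {g f : α → ENNReal}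
    (hg : Measurable g) (hf : Measurable f) :
    (∫⁻ a, g a * f a ∂μ) ^ 2 ≤ (∫⁻ a, g a ∂μ) * ∫⁻ a, g a * f a ^ 2 ∂μ := by
  have h := ENNReal.lintegral_mul_le_Lp_mul_Lq (μ.withDensity g) Real.HolderConjugate.two_two
    (f := fun _ => 1) (g := f) aemeasurable_const hf.aemeasurable
  have e₁ : ∫⁻ a, ((fun _ => 1 : α → ENNReal) * f) a ∂μ.withDensity g = ∫⁻ a, g a * f a ∂μ := by
    simp [lintegral_withDensity_eq_lintegral_mul μ hg hf]
  have e₂ : ∫⁻ _, (1 : ENNReal) ^ (2 : ℝ) ∂μ.withDensity g = ∫⁻ a, g a ∂μ := by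
    simp
  have e₃ : ∫⁻ a, f a ^ (2 : ℝ) ∂μ.withDensity g = ∫⁻ a, g a * f a ^ 2 ∂μ := by
    simp [lintegral_withDensity_eq_lintegral_mul μ hg (hf.pow_const 2)]
  rw [e₁, e₂, e₃] at h
  refine (pow_le_pow_left' h 2).trans_eq ?_
  rw [mul_pow]
  simp only [← ENNReal.rpow_natCast, ← ENNReal.rpow_mul]
  norm_num

theorem eLpNorm_two_sq {α ε : Type*} [MeasurableSpace α] [ENorm ε] (μ : Measure α) (f : α → ε) :
    eLpNorm f 2 μ ^ 2 = ∫⁻ a, ‖f a‖ₑ ^ 2 ∂μ := by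
  simpa using eLpNorm_nnreal_pow_eq_lintegral (μ := μ) (f := f) (p := 2) two_ne_zero

/-- Young's inequality `L¹ * L² ⊆ L²` for convolution in the first variable of a product. -/
theorem eLpNorm_lintegral_sub_mul_le {Y : Type*} [MeasurableSpace Y] (ν : Measure Y) [SFinite ν]
    {g : ℝ → ENNReal} (hg : Measurable g) {f : ℝ × Y → ENNReal} (hf : Measurable f) :
    eLpNorm (fun p : ℝ × Y => ∫⁻ s, g (p.1 - s) * f (s, p.2)) 2 (volume.prod ν) ≤
      (∫⁻ r, g r) * eLpNorm f 2 (volume.prod ν) := by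
  rw [← ENNReal.pow_le_pow_left_iff two_ne_zero, mul_pow, eLpNorm_two_sq, eLpNorm_two_sq]
  simp only [enorm_eq_self]
  have hm : Measurable fun p : ℝ × Y => ∫⁻ s, g (p.1 - s) * f (s, p.2) ^ 2 :=
    Measurable.lintegral_prod_right (by unfold Function.uncurry; fun_prop)
  calc ∫⁻ p : ℝ × Y, (∫⁻ s, g (p.1 - s) * f (s, p.2)) ^ 2 ∂volume.prod ν
      ≤ ∫⁻ p : ℝ × Y, ((∫⁻ r, g r) * ∫⁻ s, g (p.1 - s) * f (s, p.2) ^ 2) ∂volume.prod ν := by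
        refine lintegral_mono fun p => ?_
        refine (sq_lintegral_mul_le volume (by fun_prop) (by fun_prop)).trans_eq ?_
        rw [lintegral_sub_left_eq_self g]
    _ = (∫⁻ r, g r) * ∫⁻ y, (∫⁻ t, ∫⁻ s, g (t - s) * f (s, y) ^ 2) ∂ν := by
        rw [lintegral_const_mul _ hm, lintegral_prod_symm _ hm.aemeasurable]
    _ = (∫⁻ r, g r) * ∫⁻ y, ((∫⁻ r, g r) * ∫⁻ s, f (s, y) ^ 2) ∂ν := by
        congr 1
        refine lintegral_congr fun y => ?_
        rw [lintegral_lintegral_swap (Measurable.aemeasurable (by unfold Function.uncurry; fun_prop)),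
          ← lintegral_const_mul _ (by fun_prop)]
        refine lintegral_congr fun s => ?_
        rw [lintegral_mul_const _ (by fun_prop), lintegral_sub_right_eq_self g]
    _ = (∫⁻ r, g r) ^ 2 * ∫⁻ p, f p ^ 2 ∂volume.prod ν := by
        have hm' : Measurable fun y => ∫⁻ s, f (s, y) ^ 2 :=
          Measurable.lintegral_prod_left' (hf.pow_const 2)
        rw [lintegral_const_mul _ hm', lintegral_prod_symm _ (hf.pow_const 2).aemeasurable, sq,
          mul_assoc]

theorem lintegral_ofReal_mul_exp_neg_mul_sq {a b : ℝ} (ha : 0 ≤ a) (hb : 0 < b) :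
    ∫⁻ r : ℝ, ENNReal.ofReal (a * Real.exp (-b * r ^ 2)) =
      ENNReal.ofReal (a * √(Real.pi / b)) := by
  rw [← integral_gaussian, ← integral_const_mul, ofReal_integral_eq_lintegral_ofReal
    ((integrable_exp_neg_mul_sq hb).const_mul a) (ae_of_all _ fun r => by positivity)]

/-- Off-diagonal Gaussian bound: if the supports of `χ₁` and `χ₂` are at `t`-distance
at least `d > 0`, then `‖χ₁ e^{-|D_t|²/λ}(χ₂ u)‖_{L²} ≤ C e^{-cλ} ‖u‖_{L²}`, where
`e^{-|D_t|²/λ}` is realized by its heat-kernel formula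
`(e^{-|D_t|²/λ}v)(t,x) = √(λ/4π) ∫ e^{-λ(t-s)²/4} v(s,x) ds`. -/
theorem stmt_12 {m : ℕ} (χ₁ χ₂ : (ℝ × (Fin m → ℝ)) → ℂ)
    (h₁ : ContDiff ℝ (⊤ : ℕ∞) χ₁) (h₂ : ContDiff ℝ (⊤ : ℕ∞) χ₂)
    (hb₁ : ∀ k : ℕ, ∃ M : ℝ, ∀ p, ‖iteratedFDeriv ℝ k χ₁ p‖ ≤ M)
    (hb₂ : ∀ k : ℕ, ∃ M : ℝ, ∀ p, ‖iteratedFDeriv ℝ k χ₂ p‖ ≤ M)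
    (d : ℝ) (hd : 0 < d)
    (hsupp : ∀ p q : ℝ × (Fin m → ℝ), χ₁ p ≠ 0 → χ₂ q ≠ 0 → d ≤ |p.1 - q.1|) :
    ∃ C > (0 : ℝ), ∃ c > (0 : ℝ), ∀ u : SchwartzMap (ℝ × (Fin m → ℝ)) ℂ, ∀ l : ℝ, 0 < l →
      eLpNorm (fun p : ℝ × (Fin m → ℝ) =>
          χ₁ p * (((Real.sqrt (l / (4 * Real.pi)) : ℝ) : ℂ) *
            ∫ s : ℝ, Complex.exp (((-(l * (p.1 - s) ^ 2) / 4 : ℝ)) : ℂ) *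
              (χ₂ (s, p.2) * u (s, p.2)))) 2 volume
        ≤ ENNReal.ofReal (C * Real.exp (-c * l)) * eLpNorm (fun p => u p) 2 volume := by
  obtain ⟨M₁, hM₁⟩ := hb₁ 0
  obtain ⟨M₂, hM₂⟩ := hb₂ 0
  simp only [norm_iteratedFDeriv_zero] at hM₁ hM₂
  have hM₁0 : 0 ≤ M₁ := (norm_nonneg _).trans (hM₁ 0)
  have hM₂0 : 0 ≤ M₂ := (norm_nonneg _).trans (hM₂ 0)
  refine ⟨√2 * (M₁ * M₂ + 1), by positivity, d ^ 2 / 8, by positivity, fun u l hl => ?_⟩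
  set A : ℝ := M₁ * M₂ * Real.exp (-(d ^ 2 / 8) * l) * √(l / (4 * Real.pi)) with hA
  have hA0 : 0 ≤ A := by positivity
  set k : ℝ → ENNReal := fun r => ENNReal.ofReal (A * Real.exp (-(l / 8) * r ^ 2)) with hk
  have hk_int : ∫⁻ r, k r ≤
      ENNReal.ofReal (√2 * (M₁ * M₂ + 1) * Real.exp (-(d ^ 2 / 8) * l)) := by
    rw [hk, lintegral_ofReal_mul_exp_neg_mul_sq hA0 (by positivity)]
    apply ENNReal.ofReal_le_ofReal
    have hs : √(l / (4 * Real.pi)) * √(Real.pi / (l / 8)) = √2 := by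
      rw [← Real.sqrt_mul (by positivity)]
      congr 1
      field_simp
      norm_num
    calc A * √(Real.pi / (l / 8))
        = √2 * (M₁ * M₂) * Real.exp (-(d ^ 2 / 8) * l) := by rw [hA, ← hs]; ring
      _ ≤ _ := by gcongr; linarith
  have hu : Measurable fun p => ‖u p‖ₑ := u.continuous.measurable.enorm
  calc _ ≤ eLpNorm (fun p : ℝ × (Fin m → ℝ) => ∫⁻ s, k (p.1 - s) * ‖u (s, p.2)‖ₑ) 2 volume := by
        refine eLpNorm_mono_enorm fun p => ?_
        rw [← integral_const_mul, ← integral_const_mul, enorm_eq_self]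
        refine (enorm_integral_le_lintegral_enorm _).trans (lintegral_mono fun s => ?_)
        rw [hk, ← ofReal_norm, ← ofReal_norm, ← ENNReal.ofReal_mul (by positivity)]
        apply ENNReal.ofReal_le_ofReal
        by_cases h : χ₁ p = 0 ∨ χ₂ (s, p.2) = 0
        · rcases h with h | h <;> · simp only [h, zero_mul, mul_zero, norm_zero]; positivity
        push Not at h
        have hds : d ^ 2 ≤ (p.1 - s) ^ 2 := by
          rw [← sq_abs (p.1 - s)]
          exact pow_le_pow_left₀ hd.le (hsupp p (s, p.2) h.1 h.2) 2
        have hexp : Real.exp (-(l * (p.1 - s) ^ 2) / 4) ≤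
            Real.exp (-(d ^ 2 / 8) * l) * Real.exp (-(l / 8) * (p.1 - s) ^ 2) := by
          rw [← Real.exp_add]
          apply Real.exp_le_exp.2
          nlinarith
        rw [← Complex.ofReal_exp]
        simp only [norm_mul, Complex.norm_real, Real.norm_eq_abs, Real.abs_exp,
          abs_of_nonneg (Real.sqrt_nonneg _)]
        calc ‖χ₁ p‖ * (√(l / (4 * Real.pi)) * (Real.exp (-(l * (p.1 - s) ^ 2) / 4) *
              (‖χ₂ (s, p.2)‖ * ‖u (s, p.2)‖)))
            ≤ M₁ * (√(l / (4 * Real.pi)) * (Real.exp (-(d ^ 2 / 8) * l) *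
              Real.exp (-(l / 8) * (p.1 - s) ^ 2) * (M₂ * ‖u (s, p.2)‖))) := by
              gcongr
              · exact hM₁ p
              · exact hM₂ _
          _ = A * Real.exp (-(l / 8) * (p.1 - s) ^ 2) * ‖u (s, p.2)‖ := by rw [hA]; ring
    _ ≤ (∫⁻ r, k r) * eLpNorm (fun p => ‖u p‖ₑ) 2 volume := by
        have hkm : Measurable k := by rw [hk]; fun_prop
        rw [Measure.volume_eq_prod]
        exact eLpNorm_lintegral_sub_mul_le (Y := Fin m → ℝ) volume (g := k) hkm
          (f := fun p => ‖u p‖ₑ) hu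
    _ ≤ _ := by
        rw [eLpNorm_enorm]
        exact mul_le_mul_left hk_int _
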